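/- Let A : [0,∞) → ℝ^{2×2} be bounded and continuous with A(t) → A_∞ as t → ∞ for a constant matrix A_∞ satisfying det A_∞ < 0. Let Φ : [0,∞) → ℝ^{2×2} be a fundamental matrix of the system x′ = A(t)x, i.e. Φ is differentiable with Φ′(t) = A(t)Φ(t), Φ(0) = I, and Φ(t) is invertible for every t ≥ 0. Then the system has an exponential dichotomy on [0,∞): there exist a matrix P ∈ ℝ^{2×2} with P² = P and constants K ≥ 1, α > 0 such that ‖Φ(t) P Φ(s)^{−1}‖ ≤ K e^{−α(t−s)} whenever 0 ≤ s ≤ t, and ‖Φ(t)(I − P)Φ(s)^{−1}‖ ≤ K e^{−α(s−t)} whenever 0 ≤ t ≤ s. -/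

import Mathlib

noncomputable section

open Real Filter

/-- The operator-type matrix norm used in the dichotomy estimates: here we take the fixed norm
given by the sum of the absolute values of the entries (equivalent to the operator norm). -/
def matNorm (M : Matrix (Fin 2) (Fin 2) ℝ) : ℝ := ∑ i : Fin 2, ∑ j : Fin 2, |M i j|

lemma mono_of_hasDeriv {f f' : ℝ → ℝ} {T : ℝ} (h : ∀ t, T ≤ t → HasDerivAt f (f' t) t)
    (h0 : ∀ t, T ≤ t → 0 ≤ f' t) : ∀ s t, T ≤ s → s ≤ t → f s ≤ f t := by
  have : MonotoneOn f (Set.Ici T) := by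
    apply monotoneOn_of_deriv_nonneg (convex_Ici T)
    · intro t ht; exact (h t ht).continuousAt.continuousWithinAt
    · intro t ht
      rw [interior_Ici] at ht
      exact (h t (le_of_lt ht)).differentiableAt.differentiableWithinAt
    · intro t ht
      rw [interior_Ici] at ht
      rw [(h t (le_of_lt ht)).deriv]
      exact h0 t (le_of_lt ht)
  intro s t hs hst
  exact this hs (le_trans hs hst) hst

/-- Coefficients close to a diagonal hyperbolic system after time `T`. -/
def Near (B : ℝ → Matrix (Fin 2) (Fin 2) ℝ) (T m : ℝ) : Prop :=
  ∀ t, T ≤ t → B t 0 0 ≤ -m ∧ m ≤ B t 1 1 ∧ |B t 0 1| ≤ m / 10 ∧ |B t 1 0| ≤ m / 10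

lemma mul_bound {q e u v : ℝ} (hq : |q| ≤ e) : -(e * (u^2+v^2)/2) ≤ q * (u * v) ∧ q * (u * v) ≤ e * (u^2+v^2)/2 := by
  obtain ⟨h1, h2⟩ := abs_le.mp hq
  constructor <;> nlinarith [mul_nonneg (sub_nonneg.2 h1) (sq_nonneg (u+v)), mul_nonneg (sub_nonneg.2 h1) (sq_nonneg (u-v)),
    mul_nonneg (sub_nonneg.2 h2) (sq_nonneg (u+v)), mul_nonneg (sub_nonneg.2 h2) (sq_nonneg (u-v))]

section
variable {B : ℝ → Matrix (Fin 2) (Fin 2) ℝ} {T m : ℝ} {u v : ℝ → ℝ}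

lemma Q_mono (hm : 0 < m) (hB : Near B T m)
    (hu : ∀ t, T ≤ t → HasDerivAt u (B t 0 0 * u t + B t 0 1 * v t) t)
    (hv : ∀ t, T ≤ t → HasDerivAt v (B t 1 0 * u t + B t 1 1 * v t) t)
    {k : ℝ} (hk1 : 1 ≤ k) (hk4 : k ≤ 4) :
    ∀ s t, T ≤ s → s ≤ t → v s ^ 2 - k * u s ^ 2 ≤ v t ^ 2 - k * u t ^ 2 := by
  apply mono_of_hasDeriv (f := fun t => v t ^ 2 - k * u t ^ 2)
  · intro t ht
    exact ((hv t ht).pow 2).sub (((hu t ht).pow 2).const_mul k)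
  · intro t ht
    obtain ⟨h1, h2, h3, h4⟩ := hB t ht
    have a1 := (mul_bound (u := u t) (v := v t) h3).2
    have a2 := (mul_bound (u := u t) (v := v t) h4).1
    have a3 : B t 0 0 * u t ^ 2 ≤ -m * u t ^ 2 := mul_le_mul_of_nonneg_right h1 (sq_nonneg _)
    have a4 : m * v t ^ 2 ≤ B t 1 1 * v t ^ 2 := mul_le_mul_of_nonneg_right h2 (sq_nonneg _)
    have hk : 0 ≤ k := by linarith
    have b1 := mul_le_mul_of_nonneg_left a1 hk
    have b3 := mul_le_mul_of_nonneg_left a3 hk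
    have c1 : 0 ≤ m * u t ^ 2 := by positivity
    have c2 : 0 ≤ m * v t ^ 2 := by positivity
    simp only [Nat.cast_ofNat, Nat.add_one_sub_one, pow_one]
    nlinarith [mul_nonneg (sub_nonneg.2 hk1) c1, mul_nonneg (sub_nonneg.2 hk4) c2,
      mul_nonneg (sub_nonneg.2 hk1) c2, mul_nonneg (sub_nonneg.2 hk4) c1]

lemma stable_decay (hm : 0 < m) (hB : Near B T m)
    (hu : ∀ t, T ≤ t → HasDerivAt u (B t 0 0 * u t + B t 0 1 * v t) t)
    (hc : ∀ t, T ≤ t → v t ^ 2 ≤ u t ^ 2) :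
    ∀ s t, T ≤ s → s ≤ t → |u t| * exp (m / 2 * t) ≤ |u s| * exp (m / 2 * s) := by
  have key : ∀ s t, T ≤ s → s ≤ t →
      -(u s ^ 2 * exp (m * s)) ≤ -(u t ^ 2 * exp (m * t)) := by
    apply mono_of_hasDeriv (f := fun t => -(u t ^ 2 * exp (m * t)))
    · intro t ht
      exact (((hu t ht).pow 2).mul (((hasDerivAt_id t).const_mul m).exp)).neg
    · intro t ht
      obtain ⟨h1, h2, h3, h4⟩ := hB t ht
      have a1 := (mul_bound (u := u t) (v := v t) h3).2
      have a3 : B t 0 0 * u t ^ 2 ≤ -m * u t ^ 2 := mul_le_mul_of_nonneg_right h1 (sq_nonneg _)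
      have c1 : 0 ≤ m * u t ^ 2 := by positivity
      have c2 := mul_le_mul_of_nonneg_left (hc t ht) hm.le
      have : 0 ≤ -(2 * u t * (B t 0 0 * u t + B t 0 1 * v t) + m * u t ^ 2) := by nlinarith
      have h5 := mul_nonneg this (exp_pos (m * t)).le
      simp only [Nat.cast_ofNat, Nat.add_one_sub_one, pow_one, id, mul_one, Pi.pow_apply]
      linarith
  intro s t hs hst
  have h := key s t hs hst
  have h2 : (u t * exp (m / 2 * t)) ^ 2 ≤ (u s * exp (m / 2 * s)) ^ 2 := by
    rw [mul_pow, mul_pow, ← Real.exp_nat_mul, ← Real.exp_nat_mul]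
    have e : ∀ x : ℝ, ((2:ℕ):ℝ) * (m / 2 * x) = m * x := by intro x; push_cast; ring
    rw [e, e]; linarith
  have h3 := sq_le_sq.mp h2
  rwa [abs_mul, abs_mul, abs_of_pos (exp_pos _), abs_of_pos (exp_pos _)] at h3

lemma unstable_growth (hm : 0 < m) (hB : Near B T m)
    (hv : ∀ t, T ≤ t → HasDerivAt v (B t 1 0 * u t + B t 1 1 * v t) t)
    (hc : ∀ t, T ≤ t → u t ^ 2 ≤ v t ^ 2) :
    ∀ s t, T ≤ s → s ≤ t → |v s| * exp (-(m / 2 * s)) ≤ |v t| * exp (-(m / 2 * t)) := by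
  have key : ∀ s t, T ≤ s → s ≤ t →
      (v s ^ 2 * exp (-m * s)) ≤ (v t ^ 2 * exp (-m * t)) := by
    apply mono_of_hasDeriv (f := fun t => (v t ^ 2 * exp (-m * t)))
    · intro t ht
      exact (((hv t ht).pow 2).mul (((hasDerivAt_id t).const_mul (-m)).exp))
    · intro t ht
      obtain ⟨h1, h2, h3, h4⟩ := hB t ht
      have a1 := (mul_bound (u := u t) (v := v t) h4).1
      have a3 : m * v t ^ 2 ≤ B t 1 1 * v t ^ 2 := mul_le_mul_of_nonneg_right h2 (sq_nonneg _)
      have c1 : 0 ≤ m * v t ^ 2 := by positivity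
      have c2 := mul_le_mul_of_nonneg_left (hc t ht) hm.le
      have : 0 ≤ (2 * v t * (B t 1 0 * u t + B t 1 1 * v t) - m * v t ^ 2) := by nlinarith
      have h5 := mul_nonneg this (exp_pos (-m * t)).le
      simp only [Nat.cast_ofNat, Nat.add_one_sub_one, pow_one, id, mul_one, Pi.pow_apply]
      linarith
  intro s t hs hst
  have h := key s t hs hst
  have h2 : (v s * exp (-(m / 2 * s))) ^ 2 ≤ (v t * exp (-(m / 2 * t))) ^ 2 := by
    rw [mul_pow, mul_pow, ← Real.exp_nat_mul, ← Real.exp_nat_mul]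
    have e : ∀ x : ℝ, ((2:ℕ):ℝ) * (-(m / 2 * x)) = -m * x := by intro x; push_cast; ring
    rw [e, e]; linarith
  have h3 := sq_le_sq.mp h2
  rwa [abs_mul, abs_mul, abs_of_pos (exp_pos _), abs_of_pos (exp_pos _)] at h3

end

/-- bounded after `T` + continuous implies bounded. -/
lemma bdd_of_tail {f : ℝ → ℝ} {T C : ℝ} (hf : ContinuousOn f (Set.Ici 0))
    (h : ∀ t, T ≤ t → f t ≤ C) : ∃ K, 0 < K ∧ ∀ t, 0 ≤ t → f t ≤ K := by
  have hc : IsCompact (Set.Icc (0:ℝ) T) := isCompact_Icc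
  obtain ⟨M, hM⟩ := hc.bddAbove_image (hf.mono (fun x hx => hx.1))
  refine ⟨max 1 (max M C), by positivity, fun t ht => ?_⟩
  rcases le_total T t with h1 | h1
  · exact (h t h1).trans ((le_max_right _ _).trans (le_max_right _ _))
  · exact (hM ⟨t, ⟨ht, h1⟩, rfl⟩).trans ((le_max_left _ _).trans (le_max_right _ _))

lemma quasi_mono {h : ℝ → ℝ} {T : ℝ} (hT : 0 ≤ T) (hf : ContinuousOn h (Set.Ici 0))
    (hpos : ∀ t, 0 ≤ t → 0 < h t)
    (hd : ∀ s t, T ≤ s → s ≤ t → h t ≤ 2 * h s) :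
    ∃ K, 0 < K ∧ ∀ s t, 0 ≤ s → s ≤ t → h t ≤ K * h s := by
  obtain ⟨M, hM0, hM⟩ := bdd_of_tail (T := T) (C := 2 * h T) hf (fun t ht => hd T t le_rfl ht)
  have hc : IsCompact (Set.Icc (0:ℝ) T) := isCompact_Icc
  obtain ⟨x, hx, hmin⟩ := hc.exists_isMinOn ⟨0, le_rfl, hT⟩ (hf.mono (fun x hx => hx.1))
  have hxp := hpos x hx.1
  refine ⟨2 + M / h x, by positivity, fun s t hs hst => ?_⟩
  have hsp := hpos s hs
  rcases le_total T s with h1 | h1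
  · have := hd s t h1 hst
    have : 0 ≤ M / h x * h s := by positivity
    linarith
  · have h2 : h x ≤ h s := hmin (show s ∈ Set.Icc 0 T from ⟨hs, h1⟩)
    have h3 := hM t (hs.trans hst)
    have h4 : M ≤ M / h x * h s := by
      rw [div_mul_eq_mul_div, le_div_iff₀ hxp]
      exact mul_le_mul_of_nonneg_left h2 hM0.le
    linarith

lemma matNorm_nonneg (M : Matrix (Fin 2) (Fin 2) ℝ) : 0 ≤ matNorm M := by
  unfold matNorm; positivity

lemma matNorm_mul (M N : Matrix (Fin 2) (Fin 2) ℝ) : matNorm (M * N) ≤ matNorm M * matNorm N := by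
  unfold matNorm
  simp only [Fin.sum_univ_two, Matrix.mul_apply]
  have h : ∀ i j, |M i 0 * N 0 j + M i 1 * N 1 j| ≤ |M i 0| * |N 0 j| + |M i 1| * |N 1 j| := by
    intro i j
    rw [← abs_mul, ← abs_mul]; exact abs_add_le _ _
  have p : ∀ i j k l, 0 ≤ |M i j| * |N k l| := fun i j k l => by positivity
  nlinarith [h 0 0, h 0 1, h 1 0, h 1 1, p 0 0 1 0, p 0 0 1 1, p 0 1 0 0, p 0 1 0 1,
    p 1 0 1 0, p 1 0 1 1, p 1 1 0 0, p 1 1 0 1]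

lemma exists_diag (A : Matrix (Fin 2) (Fin 2) ℝ) (h : A.det < 0) :
    ∃ (R S : Matrix (Fin 2) (Fin 2) ℝ) (l n : ℝ), 0 < l ∧ 0 < n ∧ S * R = 1 ∧ R * S = 1 ∧
      R * A * S = !![-l, 0; 0, n] := by
  set τ := A 0 0 + A 1 1 with hτ
  have hdet : A.det = A 0 0 * A 1 1 - A 0 1 * A 1 0 := Matrix.det_fin_two A
  set δ := A.det with hδ
  have hD : 0 < τ ^ 2 - 4 * δ := by nlinarith [sq_nonneg τ]
  set r := √(τ ^ 2 - 4 * δ) with hr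
  have hr2 : r ^ 2 = τ ^ 2 - 4 * δ := Real.sq_sqrt hD.le
  have hr0 : 0 ≤ r := Real.sqrt_nonneg _
  have hrt : |τ| < r := by
    apply lt_of_pow_lt_pow_left₀ 2 hr0
    rw [sq_abs]; linarith
  obtain ⟨ht1, ht2⟩ := abs_lt.mp hrt
  have ev : ∀ x : ℝ, x ^ 2 - τ * x + δ = 0 → ∃ p q : ℝ, (p ≠ 0 ∨ q ≠ 0) ∧
      A 0 0 * p + A 0 1 * q = x * p ∧ A 1 0 * p + A 1 1 * q = x * q := by
    intro x hx
    have hx2 : (A - Matrix.scalar (Fin 2) x).det = 0 := by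
      rw [Matrix.det_fin_two]
      simp
      nlinarith
    obtain ⟨w, hw, hw0⟩ := Matrix.exists_mulVec_eq_zero_iff.mpr hx2
    have e0 := congrFun hw0 0
    have e1 := congrFun hw0 1
    simp [Matrix.mulVec, dotProduct, Fin.sum_univ_two] at e0 e1
    refine ⟨w 0, w 1, ?_, by linarith, by linarith⟩
    by_contra hcon
    push Not at hcon
    apply hw
    ext i; fin_cases i
    · exact hcon.1
    · exact hcon.2
  obtain ⟨p, q, hpq, e1, e2⟩ := ev ((τ - r) / 2) (by nlinarith)
  obtain ⟨p', q', hpq', e1', e2'⟩ := ev ((τ + r) / 2) (by nlinarith)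
  have hr1 : r ≠ 0 := by intro h0; rw [h0] at ht1 ht2; linarith
  set S : Matrix (Fin 2) (Fin 2) ℝ := !![p, p'; q, q'] with hS
  have hd : S.det ≠ 0 := by
    intro h0
    rw [Matrix.det_fin_two] at h0
    simp [hS] at h0
    have g1 : r * (p * p') = 0 := by linear_combination p' * e1 - p * e1' + A 0 1 * h0
    have g2 : r * (q * q') = 0 := by linear_combination q' * e2 - q * e2' - A 1 0 * h0
    have g1 : p * p' = 0 := (mul_eq_zero.mp g1).resolve_left hr1
    have g2 : q * q' = 0 := (mul_eq_zero.mp g2).resolve_left hr1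
    rcases hpq with hp | hq
    · have h1 : p' = 0 := (mul_eq_zero.mp g1).resolve_left hp
      rw [h1] at h0
      have h2 : q' = 0 := by
        have : p * q' = 0 := by linarith
        exact (mul_eq_zero.mp this).resolve_left hp
      rcases hpq' with h | h <;> contradiction
    · have h1 : q' = 0 := (mul_eq_zero.mp g2).resolve_left hq
      rw [h1] at h0
      have h2 : p' = 0 := by
        have : p' * q = 0 := by linarith
        exact (mul_eq_zero.mp this).resolve_right hq
      rcases hpq' with h | h <;> contradiction
  have u : IsUnit S.det := isUnit_iff_ne_zero.mpr hd
  refine ⟨S⁻¹, S, (r - τ) / 2, (τ + r) / 2, by linarith, by linarith,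
    Matrix.mul_nonsing_inv _ u, Matrix.nonsing_inv_mul _ u, ?_⟩
  have : A * S = S * !![-((r - τ) / 2), 0; 0, (τ + r) / 2] := by
    ext i j
    fin_cases i <;> fin_cases j <;> simp [Matrix.mul_apply, Fin.sum_univ_two, hS] <;> linarith
  rw [Matrix.mul_assoc, this, ← Matrix.mul_assoc, Matrix.nonsing_inv_mul _ u, Matrix.one_mul]

section
variable {B W : ℝ → Matrix (Fin 2) (Fin 2) ℝ} {T m : ℝ}

lemma col_deriv (hW : ∀ t, 0 ≤ t → ∀ i j, HasDerivAt (fun s => W s i j) ((B t * W t) i j) t)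
    (x : Fin 2 → ℝ) (t : ℝ) (ht : 0 ≤ t) (i : Fin 2) :
    HasDerivAt (fun s => (W s).mulVec x i)
      (B t i 0 * (W t).mulVec x 0 + B t i 1 * (W t).mulVec x 1) t := by
  have h := ((hW t ht i 0).mul_const (x 0)).add ((hW t ht i 1).mul_const (x 1))
  have e1 : (fun s => (W s).mulVec x i) =
      ((fun y => W y i 0 * x 0) + fun y => W y i 1 * x 1) := by
    funext s
    simp only [Matrix.mulVec, dotProduct, Fin.sum_univ_two, Pi.add_apply]
  have e2 : B t i 0 * (W t).mulVec x 0 + B t i 1 * (W t).mulVec x 1 =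
      (B t * W t) i 0 * x 0 + (B t * W t) i 1 * x 1 := by
    simp only [Matrix.mulVec, dotProduct, Fin.sum_univ_two, Matrix.mul_apply]; ring
  rw [e1, e2]
  exact h

lemma exists_stable (hT : 0 ≤ T) (hm : 0 < m) (hB : Near B T m)
    (hW : ∀ t, 0 ≤ t → ∀ i j, HasDerivAt (fun s => W s i j) ((B t * W t) i j) t)
    (hdet : ∀ t, 0 ≤ t → (W t).det ≠ 0) :
    ∃ x : Fin 2 → ℝ, x ≠ 0 ∧
      ∀ t, T ≤ t → (W t).mulVec x 1 ^ 2 ≤ (W t).mulVec x 0 ^ 2 := by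
  have hmono : ∀ x : Fin 2 → ℝ, ∀ s t, T ≤ s → s ≤ t →
      (W s).mulVec x 1 ^ 2 - 1 * (W s).mulVec x 0 ^ 2 ≤
      (W t).mulVec x 1 ^ 2 - 1 * (W t).mulVec x 0 ^ 2 := fun x =>
    Q_mono (u := fun t => (W t).mulVec x 0) (v := fun t => (W t).mulVec x 1) hm hB
      (fun t ht => col_deriv hW x t (hT.trans ht) 0) (fun t ht => col_deriv hW x t (hT.trans ht) 1)
      le_rfl (by norm_num)
  let Z : ℕ → Set (Fin 2 → ℝ) := fun n =>
    Metric.sphere 0 1 ∩ {x | (W (T + n)).mulVec x 1 ^ 2 ≤ (W (T + n)).mulVec x 0 ^ 2}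
  have hcl : ∀ n, IsClosed (Z n) := by
    intro n
    apply Metric.isClosed_sphere.inter
    apply isClosed_le
    · simp only [Matrix.mulVec, dotProduct]; fun_prop
    · simp only [Matrix.mulVec, dotProduct]; fun_prop
  have hne : ∀ n, (Z n).Nonempty := by
    intro n
    have h0 : 0 ≤ T + (n:ℝ) := by positivity
    have hd := isUnit_iff_ne_zero.mpr (hdet _ h0)
    set y : Fin 2 → ℝ := (W (T + n))⁻¹.mulVec ![1, 0] with hy
    have hWy : (W (T + n)).mulVec y = ![1, 0] := by
      rw [hy, Matrix.mulVec_mulVec, Matrix.mul_nonsing_inv _ hd, Matrix.one_mulVec]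
    have hy0 : y ≠ 0 := by
      intro h
      rw [h, Matrix.mulVec_zero] at hWy
      have := congrFun hWy 0
      simp at this
    refine ⟨‖y‖⁻¹ • y, ?_, ?_⟩
    · simp [norm_smul, hy0]
    · simp only [Set.mem_ofPred_eq, Matrix.mulVec_smul, hWy]
      simp
  obtain ⟨x, hx⟩ := IsCompact.nonempty_iInter_of_sequence_nonempty_isCompact_isClosed Z
    (by
      intro n x hx
      refine ⟨hx.1, ?_⟩
      have h1 := hx.2
      have h2 := hmono x (T + n) (T + (n + 1 : ℕ)) (by simp) (by push_cast; linarith)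
      simp only [Set.mem_ofPred_eq] at h1 ⊢
      linarith) hne ((isCompact_sphere 0 1).of_isClosed_subset (hcl 0) Set.inter_subset_left) hcl
  rw [Set.mem_iInter] at hx
  refine ⟨x, ?_, ?_⟩
  · rintro rfl
    have := (hx 0).1
    simp at this
  · intro t ht
    obtain ⟨n, hn⟩ := exists_nat_ge (t - T)
    have h1 := (hx n).2
    have h2 := hmono x t (T + n) ht (by linarith)
    simp only [Set.mem_ofPred_eq] at h1
    linarith

lemma exists_C (hT : 0 ≤ T) (hm : 0 < m) (hB : Near B T m)
    (hW : ∀ t, 0 ≤ t → ∀ i j, HasDerivAt (fun s => W s i j) ((B t * W t) i j) t)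
    (hdet : ∀ t, 0 ≤ t → (W t).det ≠ 0) :
    ∃ C : Matrix (Fin 2) (Fin 2) ℝ, C.det ≠ 0 ∧
      (∀ t, T ≤ t → (W t * C) 1 0 ^ 2 ≤ (W t * C) 0 0 ^ 2) ∧
      (∀ t, T ≤ t → 4 * (W t * C) 0 1 ^ 2 ≤ (W t * C) 1 1 ^ 2) := by
  obtain ⟨x, hx0, hx⟩ := exists_stable hT hm hB hW hdet
  have hd := isUnit_iff_ne_zero.mpr (hdet T hT)
  set y : Fin 2 → ℝ := (W T)⁻¹.mulVec ![0, 1] with hy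
  have hWy : (W T).mulVec y = ![0, 1] := by
    rw [hy, Matrix.mulVec_mulVec, Matrix.mul_nonsing_inv _ hd, Matrix.one_mulVec]
  have hmono := Q_mono (u := fun t => (W t).mulVec y 0) (v := fun t => (W t).mulVec y 1) hm hB
      (fun t ht => col_deriv hW y t (hT.trans ht) 0) (fun t ht => col_deriv hW y t (hT.trans ht) 1)
      (k := 4) (by norm_num) le_rfl T
  have e0 : ∀ t i, (W t * !![x 0, y 0; x 1, y 1]) i 0 = (W t).mulVec x i := by
    intro t i; simp [Matrix.mul_apply, Matrix.mulVec, dotProduct, Fin.sum_univ_two]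
  have e1 : ∀ t i, (W t * !![x 0, y 0; x 1, y 1]) i 1 = (W t).mulVec y i := by
    intro t i; simp [Matrix.mul_apply, Matrix.mulVec, dotProduct, Fin.sum_univ_two]
  refine ⟨!![x 0, y 0; x 1, y 1], ?_, ?_, ?_⟩
  · intro hC
    have h1 : (W T * !![x 0, y 0; x 1, y 1]).det = 0 := by rw [Matrix.det_mul, hC, mul_zero]
    rw [Matrix.det_fin_two, e0, e0, e1, e1, hWy] at h1
    simp only [Matrix.cons_val_zero, Matrix.cons_val_one, mul_one, zero_mul, sub_zero] at h1
    have h2 := hx T le_rfl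
    rw [h1] at h2
    have h3 : (W T).mulVec x 1 = 0 := by
      apply pow_eq_zero_iff (two_ne_zero) |>.mp
      nlinarith [sq_nonneg ((W T).mulVec x 1)]
    apply hx0
    apply Matrix.eq_zero_of_mulVec_eq_zero (hdet T hT)
    ext i; fin_cases i
    · exact h1
    · exact h3
  · intro t ht; rw [e0, e0]; exact hx t ht
  · intro t ht; rw [e1, e1]
    have := hmono t le_rfl ht
    simp only [hWy, Matrix.cons_val_zero, Matrix.cons_val_one] at this
    linarith

end

/-- The dichotomy for the transformed fundamental matrix. -/
lemma dich_core {B Y : ℝ → Matrix (Fin 2) (Fin 2) ℝ} {T m : ℝ}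
    (hT : 0 ≤ T) (hm : 0 < m) (hB : Near B T m)
    (hY : ∀ t, 0 ≤ t → ∀ i j, HasDerivAt (fun s => Y s i j) ((B t * Y t) i j) t)
    (hdet : ∀ t, 0 ≤ t → (Y t).det ≠ 0)
    (hc0 : ∀ t, T ≤ t → (Y t) 1 0 ^ 2 ≤ (Y t) 0 0 ^ 2)
    (hc1 : ∀ t, T ≤ t → 4 * (Y t) 0 1 ^ 2 ≤ (Y t) 1 1 ^ 2) :
    ∃ K : ℝ, 0 < K ∧
      (∀ s t : ℝ, 0 ≤ s → s ≤ t →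
        matNorm (Y t * !![1, 0; 0, 0] * (Y s)⁻¹) ≤ K * exp (-(m / 2) * (t - s))) ∧
      (∀ t s : ℝ, 0 ≤ t → t ≤ s →
        matNorm (Y t * !![0, 0; 0, 1] * (Y s)⁻¹) ≤ K * exp (-(m / 2) * (s - t))) := by
  have hcont : ∀ i j, ContinuousOn (fun t => Y t i j) (Set.Ici 0) := fun i j t ht =>
    (hY t ht i j).continuousAt.continuousWithinAt
  set a : ℝ → ℝ := fun t => |Y t 0 0| + |Y t 1 0| with ha
  set b : ℝ → ℝ := fun t => |Y t 0 1| + |Y t 1 1| with hb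
  set d : ℝ → ℝ := fun t => |(Y t).det| with hd
  have hac : ContinuousOn a (Set.Ici 0) := (hcont 0 0).abs.add (hcont 1 0).abs
  have hbc : ContinuousOn b (Set.Ici 0) := (hcont 0 1).abs.add (hcont 1 1).abs
  have hdc : ContinuousOn d (Set.Ici 0) := by
    simp only [hd, Matrix.det_fin_two]
    exact (((hcont 0 0).mul (hcont 1 1)).sub ((hcont 0 1).mul (hcont 1 0))).abs
  have hdpos : ∀ t, 0 ≤ t → 0 < d t := fun t ht => abs_pos.mpr (hdet t ht)
  have hapos : ∀ t, 0 ≤ t → 0 < a t := by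
    intro t ht
    by_contra h
    have h1 := abs_nonneg (Y t 0 0)
    have h2 := abs_nonneg (Y t 1 0)
    simp only [ha] at h
    have h3 : Y t 0 0 = 0 := abs_eq_zero.mp (by linarith)
    have h4 : Y t 1 0 = 0 := abs_eq_zero.mp (by linarith)
    apply hdet t ht
    rw [Matrix.det_fin_two, h3, h4]; ring
  have hbpos : ∀ t, 0 ≤ t → 0 < b t := by
    intro t ht
    by_contra h
    have h1 := abs_nonneg (Y t 0 1)
    have h2 := abs_nonneg (Y t 1 1)
    simp only [hb] at h
    have h3 : Y t 0 1 = 0 := abs_eq_zero.mp (by linarith)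
    have h4 : Y t 1 1 = 0 := abs_eq_zero.mp (by linarith)
    apply hdet t ht
    rw [Matrix.det_fin_two, h3, h4]; ring
  have c0 : ∀ t, T ≤ t → |Y t 1 0| ≤ |Y t 0 0| := fun t ht => sq_le_sq.mp (hc0 t ht)
  have c1 : ∀ t, T ≤ t → 2 * |Y t 0 1| ≤ |Y t 1 1| := by
    intro t ht
    have : (2 * Y t 0 1) ^ 2 ≤ Y t 1 1 ^ 2 := by linarith [hc1 t ht]
    have := sq_le_sq.mp this
    rwa [abs_mul, abs_two] at this
  -- angle bound
  obtain ⟨K₁, hK₁, hab⟩ : ∃ K, 0 < K ∧ ∀ t, 0 ≤ t → a t * b t / d t ≤ K := by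
    apply bdd_of_tail (T := T) (C := 8)
    · exact (hac.mul hbc).div hdc (fun t ht => (hdpos t ht).ne')
    · intro t ht
      rw [div_le_iff₀ (hdpos t (hT.trans ht))]
      have h1 := c0 t ht
      have h2 := c1 t ht
      have h3 : |Y t 0 0| * |Y t 1 1| - |Y t 0 1| * |Y t 1 0| ≤ d t := by
        simp only [hd, Matrix.det_fin_two]
        rw [← abs_mul, ← abs_mul]
        exact abs_sub_abs_le_abs_sub _ _
      have p1 := abs_nonneg (Y t 0 0)
      have p2 := abs_nonneg (Y t 1 1)
      have p3 := abs_nonneg (Y t 0 1)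
      have p4 := abs_nonneg (Y t 1 0)
      have h4 : 2 * (|Y t 0 1| * |Y t 1 0|) ≤ |Y t 1 1| * |Y t 0 0| := by
        nlinarith [mul_le_mul h2 h1 p4 p2]
      have h5 : a t * b t ≤ (2 * |Y t 0 0|) * (2 * |Y t 1 1|) := by
        apply mul_le_mul
        · simp only [ha]; linarith
        · simp only [hb]; linarith
        · exact (hbpos t (hT.trans ht)).le
        · positivity
      nlinarith
  have hdec : ∀ s t, T ≤ s → s ≤ t → |Y t 0 0| * exp (m / 2 * t) ≤ |Y s 0 0| * exp (m / 2 * s) :=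
    stable_decay (u := fun t => Y t 0 0) (v := fun t => Y t 1 0) hm hB
      (fun t ht => by
        have := hY t (hT.trans ht) 0 0
        rwa [Matrix.mul_apply, Fin.sum_univ_two] at this) hc0
  have hgr : ∀ s t, T ≤ s → s ≤ t →
      |Y s 1 1| * exp (-(m / 2 * s)) ≤ |Y t 1 1| * exp (-(m / 2 * t)) :=
    unstable_growth (u := fun t => Y t 0 1) (v := fun t => Y t 1 1) hm hB
      (fun t ht => by
        have := hY t (hT.trans ht) 1 1
        rwa [Matrix.mul_apply, Fin.sum_univ_two] at this)
      (fun t ht => by nlinarith [hc1 t ht, sq_nonneg (Y t 0 1)])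
  obtain ⟨K₂, hK₂, hq2⟩ : ∃ K, 0 < K ∧ ∀ s t, 0 ≤ s → s ≤ t →
      a t * exp (m / 2 * t) ≤ K * (a s * exp (m / 2 * s)) := by
    apply quasi_mono (h := fun t => a t * exp (m / 2 * t)) hT
    · exact hac.mul (by fun_prop)
    · intro t ht; have := hapos t ht; positivity
    · intro s t hs hst
      have h1 := hdec s t hs hst
      have h2 : a t ≤ 2 * |Y t 0 0| := by
        have := c0 t (hs.trans hst); simp only [ha]; linarith
      have h3 : |Y s 0 0| ≤ a s := by simp only [ha]; linarith [abs_nonneg (Y s 1 0)]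
      have h4 := mul_le_mul_of_nonneg_right h2 (exp_pos (m / 2 * t)).le
      have h5 := mul_le_mul_of_nonneg_right h3 (exp_pos (m / 2 * s)).le
      linarith
  obtain ⟨K₃, hK₃, hq3⟩ : ∃ K, 0 < K ∧ ∀ s t, 0 ≤ s → s ≤ t →
      (b t * exp (-(m / 2 * t)))⁻¹ ≤ K * (b s * exp (-(m / 2 * s)))⁻¹ := by
    apply quasi_mono (h := fun t => (b t * exp (-(m / 2 * t)))⁻¹) hT
    · apply ContinuousOn.inv₀ (hbc.mul (by fun_prop))
      intro t ht; exact (mul_pos (hbpos t ht) (exp_pos _)).ne'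
    · intro t ht; have := hbpos t ht; positivity
    · intro s t hs hst
      have h1 := hgr s t hs hst
      have h2 : b s ≤ 2 * |Y s 1 1| := by
        have := c1 s hs; simp only [hb]; linarith [abs_nonneg (Y s 0 1)]
      have h3 : |Y t 1 1| ≤ b t := by simp only [hb]; linarith [abs_nonneg (Y t 0 1)]
      have h4 := mul_le_mul_of_nonneg_right h2 (exp_pos (-(m / 2 * s))).le
      have h5 := mul_le_mul_of_nonneg_right h3 (exp_pos (-(m / 2 * t))).le
      have hbs := hbpos s (hT.trans hs)
      have hbt := hbpos t (hT.trans (hs.trans hst))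
      rw [← div_eq_mul_inv, inv_le_comm₀ (by positivity) (by positivity), inv_div,
        div_le_iff₀ (by norm_num)]
      linarith
  have hinv : ∀ s, (Y s)⁻¹ = (Y s).det⁻¹ • !![Y s 1 1, -Y s 0 1; -Y s 1 0, Y s 0 0] := by
    intro s
    rw [Matrix.inv_def, Matrix.adjugate_fin_two, Ring.inverse_eq_inv]
  have n1 : ∀ s t, matNorm (Y t * !![1, 0; 0, 0] * (Y s)⁻¹) = a t * b s / d s := by
    intro s t
    rw [hinv]
    simp only [matNorm, Matrix.mul_apply, Fin.sum_univ_two, ha, hb, hd, Matrix.smul_apply]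
    simp [abs_mul]
    field_simp
    ring
  have n2 : ∀ s t, matNorm (Y t * !![0, 0; 0, 1] * (Y s)⁻¹) = b t * a s / d s := by
    intro s t
    rw [hinv]
    simp only [matNorm, Matrix.mul_apply, Fin.sum_univ_two, ha, hb, hd, Matrix.smul_apply]
    simp [abs_mul]
    field_simp
    ring
  have key : ∀ s, 0 ≤ s → a s * b s ≤ K₁ * d s := fun s hs =>
    (div_le_iff₀ (hdpos s hs)).mp (hab s hs)
  refine ⟨K₂ * K₁ + K₃ * K₁, by positivity, ?_, ?_⟩
  · intro s t hs hst
    rw [n1, div_le_iff₀ (hdpos s hs)]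
    have h1 := hq2 s t hs hst
    have h2 : a t ≤ K₂ * a s * exp (-(m / 2) * (t - s)) := by
      have : exp (-(m / 2) * (t - s)) = exp (m / 2 * s) / exp (m / 2 * t) := by
        rw [← Real.exp_sub]; congr 1; ring
      rw [this, mul_div_assoc', le_div_iff₀ (exp_pos _)]
      linarith
    calc a t * b s ≤ (K₂ * a s * exp (-(m / 2) * (t - s))) * b s :=
          mul_le_mul_of_nonneg_right h2 (hbpos s hs).le
      _ = K₂ * exp (-(m / 2) * (t - s)) * (a s * b s) := by ring
      _ ≤ K₂ * exp (-(m / 2) * (t - s)) * (K₁ * d s) :=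
          mul_le_mul_of_nonneg_left (key s hs) (by positivity)
      _ ≤ _ := by
        have := hdpos s hs
        have : 0 ≤ K₃ * K₁ * exp (-(m / 2) * (t - s)) * d s := by positivity
        linarith
  · intro t s ht hts
    have hs := ht.trans hts
    rw [n2, div_le_iff₀ (hdpos s hs)]
    have h1 := hq3 t s ht hts
    have h2 : b t ≤ K₃ * b s * exp (-(m / 2) * (s - t)) := by
      have e : exp (-(m / 2) * (s - t)) = exp (-(m / 2 * s)) / exp (-(m / 2 * t)) := by
        rw [← Real.exp_sub]; congr 1; ring
      have hbs := hbpos s hs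
      have hbt := hbpos t ht
      rw [e, mul_div_assoc', le_div_iff₀ (exp_pos _)]
      rw [← div_eq_mul_inv, inv_le_comm₀ (by positivity) (by positivity), inv_div,
        div_le_iff₀ hK₃] at h1
      linarith
    calc b t * a s ≤ (K₃ * b s * exp (-(m / 2) * (s - t))) * a s :=
          mul_le_mul_of_nonneg_right h2 (hapos s hs).le
      _ = K₃ * exp (-(m / 2) * (s - t)) * (a s * b s) := by ring
      _ ≤ K₃ * exp (-(m / 2) * (s - t)) * (K₁ * d s) :=
          mul_le_mul_of_nonneg_left (key s hs) (by positivity)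
      _ ≤ _ := by
        have := hdpos s hs
        have : 0 ≤ K₂ * K₁ * exp (-(m / 2) * (s - t)) * d s := by positivity
        linarith

lemma deriv_mul_const_mat {Φ D : ℝ → Matrix (Fin 2) (Fin 2) ℝ} {t : ℝ}
    (h : ∀ i j, HasDerivAt (fun s => Φ s i j) (D t i j) t) (R C : Matrix (Fin 2) (Fin 2) ℝ) (i j : Fin 2) :
    HasDerivAt (fun s => (R * Φ s * C) i j) ((R * D t * C) i j) t := by
  simp only [Matrix.mul_apply, Fin.sum_univ_two]
  exact ((((h 0 0).const_mul _).add ((h 1 0).const_mul _)).mul_const _).add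
    ((((h 0 1).const_mul _).add ((h 1 1).const_mul _)).mul_const _)

/-- If `A : [0,∞) → ℝ^{2×2}` is bounded and continuous with `A(t) → A_∞` where
`det A_∞ < 0`, then the system `x′ = A(t)x` has an exponential dichotomy on `[0,∞)`: there are a
projection `P` (`P² = P`) and constants `K ≥ 1`, `α > 0` such that the fundamental matrix `Φ`
satisfies `‖Φ(t)PΦ(s)⁻¹‖ ≤ Ke^{−α(t−s)}` for `0 ≤ s ≤ t` and
`‖Φ(t)(I−P)Φ(s)⁻¹‖ ≤ Ke^{−α(s−t)}` for `0 ≤ t ≤ s`. -/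
theorem exponential_dichotomy_on_halfline
    (A : ℝ → Matrix (Fin 2) (Fin 2) ℝ)
    (hAbd : ∃ M : ℝ, ∀ t : ℝ, 0 ≤ t → matNorm (A t) ≤ M)
    (hAcont : ∀ i j : Fin 2, ContinuousOn (fun t => A t i j) (Set.Ici 0))
    (Ainf : Matrix (Fin 2) (Fin 2) ℝ)
    (hlim : ∀ i j : Fin 2, Tendsto (fun t => A t i j) atTop (nhds (Ainf i j)))
    (hdet : Ainf.det < 0)
    (Φ : ℝ → Matrix (Fin 2) (Fin 2) ℝ)
    (hΦderiv : ∀ t : ℝ, 0 ≤ t → ∀ i j : Fin 2,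
      HasDerivAt (fun s => Φ s i j) ((A t * Φ t) i j) t)
    (hΦ0 : Φ 0 = 1)
    (hΦinv : ∀ t : ℝ, 0 ≤ t → IsUnit (Φ t)) :
    ∃ (P : Matrix (Fin 2) (Fin 2) ℝ) (K α : ℝ), P * P = P ∧ 1 ≤ K ∧ 0 < α ∧
      (∀ s t : ℝ, 0 ≤ s → s ≤ t →
        matNorm (Φ t * P * (Φ s)⁻¹) ≤ K * Real.exp (-α * (t - s))) ∧
      (∀ t s : ℝ, 0 ≤ t → t ≤ s →
        matNorm (Φ t * (1 - P) * (Φ s)⁻¹) ≤ K * Real.exp (-α * (s - t))) := by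
  obtain ⟨R, S, l, n, hl, hn, hSR, hRS, hdiag⟩ := exists_diag Ainf hdet
  set B : ℝ → Matrix (Fin 2) (Fin 2) ℝ := fun t => R * A t * S with hBdef
  have hBlim : ∀ i j, Tendsto (fun t => B t i j) atTop (nhds ((R * Ainf * S) i j)) := by
    intro i j
    simp only [hBdef, Matrix.mul_apply, Fin.sum_univ_two]
    exact ((((hlim 0 0).const_mul _).add ((hlim 1 0).const_mul _)).mul_const _).add
      ((((hlim 0 1).const_mul _).add ((hlim 1 1).const_mul _)).mul_const _)
  rw [hdiag] at hBlim
  set m := min l n / 2 with hmdef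
  have hmin : 0 < min l n := lt_min hl hn
  have hm : 0 < m := by positivity
  have hml : m < l := by have := min_le_left l n; linarith
  have hmn : m < n := by have := min_le_right l n; linarith
  have hm10 : 0 < m / 10 := by positivity
  obtain ⟨T, hT, hB⟩ : ∃ T, 0 ≤ T ∧ Near B T m := by
    have e1 : ∀ᶠ t in atTop, B t 0 0 < -m := (hBlim 0 0).eventually_lt_const (by simpa using hml)
    have e2 : ∀ᶠ t in atTop, m < B t 1 1 := (hBlim 1 1).eventually_const_lt (by simpa using hmn)
    have e3 : ∀ᶠ t in atTop, |B t 0 1| < m / 10 :=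
      (hBlim 0 1).abs.eventually_lt_const (by simpa using hm)
    have e4 : ∀ᶠ t in atTop, |B t 1 0| < m / 10 :=
      (hBlim 1 0).abs.eventually_lt_const (by simpa using hm)
    obtain ⟨T, hT⟩ := eventually_atTop.mp (e1.and (e2.and (e3.and e4)))
    refine ⟨max 0 T, le_max_left _ _, fun t ht => ?_⟩
    obtain ⟨h1, h2, h3, h4⟩ := hT t ((le_max_right _ _).trans ht)
    exact ⟨h1.le, h2.le, h3.le, h4.le⟩
  have hRdet : R.det ≠ 0 := by
    intro h
    have := congrArg Matrix.det hRS
    rw [Matrix.det_mul, h] at this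
    simp at this
  have hΦdet : ∀ t, 0 ≤ t → (Φ t).det ≠ 0 := fun t ht =>
    ((Matrix.isUnit_iff_isUnit_det _).mp (hΦinv t ht)).ne_zero
  have hBR : ∀ t X C, R * (A t * X) * C = B t * (R * X * C) := by
    intro t X C
    have : R * A t * (S * R) * X * C = B t * (R * X * C) := by
      simp only [hBdef, Matrix.mul_assoc]
    rw [← this, hSR]; simp only [Matrix.mul_assoc, Matrix.one_mul]
  have hgen : ∀ C : Matrix (Fin 2) (Fin 2) ℝ, ∀ t, 0 ≤ t → ∀ i j,
      HasDerivAt (fun s => (R * Φ s * C) i j) ((B t * (R * Φ t * C)) i j) t := by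
    intro C t ht i j
    have := deriv_mul_const_mat (D := fun t => A t * Φ t) (hΦderiv t ht) R C i j
    rwa [hBR] at this
  obtain ⟨C, hC, hc0, hc1⟩ := exists_C (W := fun t => R * Φ t) hT hm hB
    (by simpa using hgen 1)
    (fun t ht => by rw [Matrix.det_mul]; exact mul_ne_zero hRdet (hΦdet t ht))
  have hYdet : ∀ t, 0 ≤ t → (R * Φ t * C).det ≠ 0 := by
    intro t ht
    rw [Matrix.det_mul, Matrix.det_mul]
    exact mul_ne_zero (mul_ne_zero hRdet (hΦdet t ht)) hC
  obtain ⟨K, hK, hK1, hK2⟩ := dich_core (Y := fun t => R * Φ t * C) hT hm hB (hgen C) hYdet hc0 hc1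
  have uC : IsUnit C.det := isUnit_iff_ne_zero.mpr hC
  have hCC := Matrix.mul_nonsing_inv C uC
  have hCC' := Matrix.nonsing_inv_mul C uC
  have hRinv : R⁻¹ = S := Matrix.inv_eq_right_inv hRS
  have trans : ∀ E s t, Φ t * (C * E * C⁻¹) * (Φ s)⁻¹ =
      S * ((R * Φ t * C) * E * (R * Φ s * C)⁻¹) * R := by
    intro E s t
    rw [Matrix.mul_inv_rev, Matrix.mul_inv_rev, hRinv]
    have : S * ((R * Φ t * C) * E * (C⁻¹ * ((Φ s)⁻¹ * S))) * R =
      (S * R) * Φ t * (C * E * C⁻¹) * (Φ s)⁻¹ * (S * R) := by simp only [Matrix.mul_assoc]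
    rw [this, hSR]; simp only [Matrix.one_mul, Matrix.mul_one]
  have bound : ∀ E s t x, 0 ≤ x → matNorm ((R * Φ t * C) * E * (R * Φ s * C)⁻¹) ≤ K * x →
      matNorm (Φ t * (C * E * C⁻¹) * (Φ s)⁻¹) ≤ (1 + matNorm S * matNorm R * K) * x := by
    intro E s t x hx h
    rw [trans]
    have hS := matNorm_nonneg S
    have hR := matNorm_nonneg R
    calc _ ≤ matNorm (S * ((R * Φ t * C) * E * (R * Φ s * C)⁻¹)) * matNorm R := matNorm_mul _ _
      _ ≤ (matNorm S * matNorm ((R * Φ t * C) * E * (R * Φ s * C)⁻¹)) * matNorm R :=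
        mul_le_mul_of_nonneg_right (matNorm_mul _ _) hR
      _ ≤ (matNorm S * (K * x)) * matNorm R :=
        mul_le_mul_of_nonneg_right (mul_le_mul_of_nonneg_left h hS) hR
      _ ≤ _ := by linarith
  have hIP : 1 - C * !![1, 0; 0, 0] * C⁻¹ = C * !![0, 0; 0, 1] * C⁻¹ := by
    have h1 : (!![0, 0; 0, 1] : Matrix (Fin 2) (Fin 2) ℝ) = 1 - !![1, 0; 0, 0] := by
      ext i j; fin_cases i <;> fin_cases j <;> simp
    rw [h1, Matrix.mul_sub, Matrix.sub_mul, Matrix.mul_one, hCC]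
  refine ⟨C * !![1, 0; 0, 0] * C⁻¹, 1 + matNorm S * matNorm R * K, m / 2, ?_, ?_, by positivity,
    ?_, ?_⟩
  · have : C * !![1, 0; 0, 0] * C⁻¹ * (C * !![1, 0; 0, 0] * C⁻¹) =
      C * (!![1, 0; 0, 0] * (C⁻¹ * C) * !![1, 0; 0, 0]) * C⁻¹ := by simp only [Matrix.mul_assoc]
    rw [this, hCC', Matrix.mul_one]
    congr 2
    ext i j; fin_cases i <;> fin_cases j <;> simp
  · have hS := matNorm_nonneg S
    have hR := matNorm_nonneg R
    have : 0 ≤ matNorm S * matNorm R * K := by positivity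
    linarith
  · intro s t hs hst
    exact bound _ s t _ (Real.exp_pos _).le (hK1 s t hs hst)
  · intro t s ht hts
    rw [hIP]
    exact bound _ s t _ (Real.exp_pos _).le (hK2 t s ht hts)
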